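/- Sperner's Lemma for the standard triangulation: let n ≥ 2 and let c be a 3-coloring (with colors 0, 1, 2) of the vertex set {(i,j) ∈ ℕ × ℕ : i + j ≤ n − 1} of the standard triangulation of size n that is c-admissible, i.e., c(0,0) = 0, c(n−1,0) = 1, c(0,n−1) = 2, and moreover c(i,0) ∈ {0,1} for all i ≤ n−1, c(0,j) ∈ {0,2} for all j ≤ n−1, and c(i, n−1−i) ∈ {1,2} for all i ≤ n−1. Then the triangulation contains a three-colored elementary triangle: there exist natural numbers i, j such that either i + j ≤ n − 2 and the three colors c(i,j), c(i+1,j), c(i,j+1) are pairwise distinct, or i + j ≤ n − 3 and the three colors c(i+1,j), c(i,j+1), c(i+1,j+1) are pairwise distinct. -/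

import Mathlib

/-- Indicator (mod 2) of an edge colored with exactly the colors 0 and 1. -/
def edge01 (a b : Fin 3) : ZMod 2 :=
  if (a = 0 ∧ b = 1) ∨ (a = 1 ∧ b = 0) then 1 else 0

lemma edge01_tri : ∀ a b d : Fin 3, ¬ (a ≠ b ∧ a ≠ d ∧ b ≠ d) →
    edge01 a b = edge01 a d + edge01 b d := by
  unfold edge01; decide

lemma edge01_02 : ∀ a b : Fin 3, (a = 0 ∨ a = 2) → (b = 0 ∨ b = 2) → edge01 a b = 0 := by
  unfold edge01; decide

lemma edge01_12 : ∀ a b : Fin 3, (a = 1 ∨ a = 2) → (b = 1 ∨ b = 2) → edge01 a b = 0 := by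
  unfold edge01; decide

lemma edge01_01 : ∀ a b : Fin 3, (a = 0 ∨ a = 1) → (b = 0 ∨ b = 1) →
    edge01 0 a + edge01 a b = edge01 0 b := by
  unfold edge01; decide

lemma edge01_strip (c : ℕ → ℕ → Fin 3) (m j : ℕ)
    (up : ∀ i j, i + j + 1 ≤ m → edge01 (c i j) (c (i + 1) j) =
      edge01 (c i j) (c i (j + 1)) + edge01 (c (i + 1) j) (c i (j + 1)))
    (down : ∀ i j, i + j + 2 ≤ m → edge01 (c (i + 1) j) (c i (j + 1)) =
      edge01 (c (i + 1) j) (c (i + 1) (j + 1)) + edge01 (c i (j + 1)) (c (i + 1) (j + 1)))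
    (k : ℕ) (hk : k + j + 1 ≤ m) :
    ∑ i ∈ Finset.range (k + 1), edge01 (c i j) (c (i + 1) j) =
      edge01 (c 0 j) (c 0 (j + 1)) +
      ∑ i ∈ Finset.range k, edge01 (c i (j + 1)) (c (i + 1) (j + 1)) +
      edge01 (c (k + 1) j) (c k (j + 1)) := by
  induction k with
  | zero => simpa using up 0 j (by omega)
  | succ k ih =>
    rw [Finset.sum_range_succ, ih (by omega), Finset.sum_range_succ _ k,
      up (k + 1) j (by omega), down k j (by omega)]
    have h2 := CharTwo.add_self_eq_zero (edge01 (c (k + 1) j) (c (k + 1) (j + 1)))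
    linear_combination h2

/-- Sperner's Lemma for the standard triangulation of size `n`:
every c-admissible 3-coloring of the vertices `{(i,j) : i + j ≤ n - 1}`
contains a three-colored elementary triangle. -/
theorem sperner_standard_triangulation
    (n : ℕ) (hn : 2 ≤ n)
    (c : ℕ → ℕ → Fin 3)
    (hA : c 0 0 = 0)
    (hB : c (n - 1) 0 = 1)
    (hC : c 0 (n - 1) = 2)
    (hside01 : ∀ i : ℕ, i ≤ n - 1 → c i 0 = 0 ∨ c i 0 = 1)
    (hside02 : ∀ j : ℕ, j ≤ n - 1 → c 0 j = 0 ∨ c 0 j = 2)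
    (hside12 : ∀ i : ℕ, i ≤ n - 1 → c i (n - 1 - i) = 1 ∨ c i (n - 1 - i) = 2) :
    ∃ i j : ℕ,
      (i + j ≤ n - 2 ∧
        c i j ≠ c (i + 1) j ∧ c i j ≠ c i (j + 1) ∧ c (i + 1) j ≠ c i (j + 1)) ∨
      (i + j ≤ n - 3 ∧
        c (i + 1) j ≠ c i (j + 1) ∧ c (i + 1) j ≠ c (i + 1) (j + 1) ∧
          c i (j + 1) ≠ c (i + 1) (j + 1)) := by
  by_contra hcon
  push Not at hcon
  obtain ⟨m, rfl⟩ : ∃ m, n = m + 1 := ⟨n - 1, by omega⟩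
  simp only [Nat.add_sub_cancel] at hB hC hside01 hside02 hside12
  have up : ∀ i j, i + j + 1 ≤ m → edge01 (c i j) (c (i + 1) j) =
      edge01 (c i j) (c i (j + 1)) + edge01 (c (i + 1) j) (c i (j + 1)) := by
    intro i j h
    apply edge01_tri
    rintro ⟨h1, h2, h3⟩
    exact h3 ((hcon i j).1 (by omega) h1 h2)
  have down : ∀ i j, i + j + 2 ≤ m → edge01 (c (i + 1) j) (c i (j + 1)) =
      edge01 (c (i + 1) j) (c (i + 1) (j + 1)) +
        edge01 (c i (j + 1)) (c (i + 1) (j + 1)) := by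
    intro i j h
    apply edge01_tri
    rintro ⟨h1, h2, h3⟩
    exact h3 ((hcon i j).2 (by omega) h1 h2)
  have row : ∀ k j, k + j = m →
      ∑ i ∈ Finset.range k, edge01 (c i j) (c (i + 1) j) = 0 := by
    intro k
    induction k with
    | zero => intro j _; simp
    | succ k ih =>
      intro j h
      rw [edge01_strip c m j up down k (by omega), ih (j + 1) (by omega),
        edge01_02 _ _ (hside02 j (by omega)) (hside02 (j + 1) (by omega))]
      have e1 := hside12 (k + 1) (by omega)
      have e2 := hside12 k (by omega)
      rw [show m - (k + 1) = j by omega] at e1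
      rw [show m - k = j + 1 by omega] at e2
      rw [edge01_12 _ _ e1 e2]
      simp
  have bot : ∀ k, k ≤ m →
      ∑ i ∈ Finset.range k, edge01 (c i 0) (c (i + 1) 0) = edge01 0 (c k 0) := by
    intro k
    induction k with
    | zero => intro _; rw [hA]; simp [edge01]
    | succ k ih =>
      intro h
      rw [Finset.sum_range_succ, ih (by omega)]
      exact edge01_01 _ _ (hside01 k (by omega)) (hside01 (k + 1) h)
  have h0 := row m 0 (by omega)
  rw [bot m le_rfl, hB] at h0
  simp [edge01] at h0
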